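/- There exists a simple acyclic directed graph G with two vertices u, v such that in p=1/2 Bernoulli bond percolation on the bunkbed graph of G, \mathbb{P}(u^- \to v^-) < \mathbb{P}(u^- \to v^+). In particular, the directed acyclic Bunkbed Conjecture is false, witnessed by G = G_2^k for sufficiently large k, with u=1, v=9. -/

import Mathlib

/-- Edges of the bunkbed graph of a directed graph on vertex type `V`:
`horiz u v ε` is the copy of the directed edge `(u,v)` in bunk `ε`
(`false` = lower bunk `-`, `true` = upper bunk `+`); `vert w` is the
bidirected vertical edge `(w⁻, w⁺)`. -/
inductive BBEdge (V : Type) : Type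
  | horiz : V → V → Bool → BBEdge V
  | vert  : V → BBEdge V
deriving DecidableEq

/-- The `F`-mirroring map on single edges: vertical edges are fixed, a horizontal
edge whose shadow lies in `F` is sent to its mirrored copy in the other bunk, and
horizontal edges with shadow outside `F` are fixed. -/
def mir {V : Type} [DecidableEq V] (F : Finset (V × V)) : BBEdge V → BBEdge V
  | .horiz u v ε => if (u, v) ∈ F then .horiz u v (!ε) else .horiz u v ε
  | .vert w => .vert w

/-- The `F`-mirrored subgraph `M(H,F)`. -/
def M {V : Type} [DecidableEq V] (H : Finset (BBEdge V)) (F : Finset (V × V)) :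
    Finset (BBEdge V) :=
  H.image (mir F)
/-- The edge set of the bunkbed graph of the directed graph with vertex set `Vs`
and edge set `E`: the vertical edges at all vertices together with the two
horizontal copies of each edge. -/
def bbEdges {V : Type} [DecidableEq V] (Vs : Finset V) (E : Finset (V × V)) :
    Finset (BBEdge V) :=
  Vs.image BBEdge.vert ∪ E.image (fun p => BBEdge.horiz p.1 p.2 false) ∪
    E.image (fun p => BBEdge.horiz p.1 p.2 true)
/-- Probability of the event `A` under uniform (`p = 1/2`) Bernoulli bond
percolation on the edge set `s`: a subgraph is a uniformly random subset of `s`. -/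
noncomputable def Pr {V : Type} [DecidableEq V] (s : Finset (BBEdge V))
    (A : Finset (BBEdge V) → Prop) : ℚ :=
  letI := Classical.decPred A
  ((s.powerset.filter A).card : ℚ) / (s.powerset.card : ℚ)

/-- One step of directed traversal in a subgraph `H` of the bunkbed graph:
horizontal edges are used in their direction within a bunk, and vertical edges
may be traversed in both directions. Vertices of the bunkbed graph are pairs
`(w, ε)` with `ε : Bool` the bunk label (`false` = `-`, `true` = `+`). -/
def bbStep {V : Type} [DecidableEq V] (H : Finset (BBEdge V)) :
    V × Bool → V × Bool → Prop := fun a b =>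
  (a.1 = b.1 ∧ a.2 ≠ b.2 ∧ BBEdge.vert a.1 ∈ H) ∨
    (a.2 = b.2 ∧ BBEdge.horiz a.1 b.1 a.2 ∈ H)

/-- Directed reachability `x → y` in a subgraph of the bunkbed graph. -/
def bbReach {V : Type} [DecidableEq V] (H : Finset (BBEdge V))
    (a b : V × Bool) : Prop :=
  Relation.ReflTransGen (bbStep H) a b

/-- The edge set of the graph `G₁` of Przybyłowski's counterexample, on
vertices `1,…,9`. -/
def E1 : Finset (ℕ × ℕ) :=
  {(1,2), (1,4), (2,3), (3,4), (4,5), (3,7), (5,6), (6,7), (6,9), (7,8), (8,9)}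

/-- The vertex set of `G₁`. -/
def V1 : Finset ℕ := {1, 2, 3, 4, 5, 6, 7, 8, 9}

/-- The conditioning set `T = {2,5,8}`. -/
def T1 : Finset ℕ := {2, 5, 8}

/-- The vertices of `G₁` that are blown up into gadgets. -/
def gset : Finset ℕ := {2, 5, 8}

/-- Vertices of the blown-up graph `G₂ᵏ`: `orig n` is an untouched vertex `n` of
`G₁`; for `i ∈ {2,5,8}`, `ga i` is the entry vertex `i_a`, `gb i` the exit vertex
`i_b`, and `mid i j` the middle vertex `i_j`. -/
inductive GV : Type
  | orig : ℕ → GV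
  | ga : ℕ → GV
  | gb : ℕ → GV
  | mid : ℕ → ℕ → GV
deriving DecidableEq

/-- The vertex of `G₂ᵏ` from which the copies of the out-edges of `x` leave. -/
def srcV (x : ℕ) : GV := if x ∈ gset then .gb x else .orig x

/-- The vertex of `G₂ᵏ` to which the copies of the in-edges of `y` point. -/
def tgtV (y : ℕ) : GV := if y ∈ gset then .ga y else .orig y

/-- The edge set of `G₂ᵏ`: every edge `(x,y)` of `G₁` becomes an edge from `srcV x`
to `tgtV y`, and each gadget `i ∈ {2,5,8}` gets internal edges `(i_a, i_j)` and
`(i_j, i_b)` for `j ∈ {1,…,k}`. -/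
def E2 (k : ℕ) : Finset (GV × GV) :=
  E1.image (fun p => (srcV p.1, tgtV p.2)) ∪
    (gset ×ˢ Finset.Icc 1 k).image (fun p => (GV.ga p.1, GV.mid p.1 p.2)) ∪
    (gset ×ˢ Finset.Icc 1 k).image (fun p => (GV.mid p.1 p.2, GV.gb p.1))

/-- The vertex set of `G₂ᵏ`. -/
def Vs2 (k : ℕ) : Finset GV :=
  (V1 \ gset).image GV.orig ∪ gset.image GV.ga ∪ gset.image GV.gb ∪
    (gset ×ˢ Finset.Icc 1 k).image (fun p => GV.mid p.1 p.2)

/-- The event `C`: for each `i ∈ {2,5,8}` there is some `j ∈ {1,…,k}` such that all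
five edges `(i_j⁻, i_j⁺)`, `(i_a^±, i_j^±)`, `(i_j^±, i_b^±)` are retained. -/
def Cev (k : ℕ) (H : Finset (BBEdge GV)) : Prop :=
  ∀ i ∈ gset, ∃ j ∈ Finset.Icc 1 k,
    BBEdge.vert (GV.mid i j) ∈ H ∧
    BBEdge.horiz (GV.ga i) (GV.mid i j) false ∈ H ∧
    BBEdge.horiz (GV.ga i) (GV.mid i j) true ∈ H ∧
    BBEdge.horiz (GV.mid i j) (GV.gb i) false ∈ H ∧
    BBEdge.horiz (GV.mid i j) (GV.gb i) true ∈ H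

/-!
Let `k → ∞`: with probability tending to `1` every gadget of `G₂ᵏ` contains a retained path through
a retained middle post in both bunks, so percolation on `G₂ᵏ` converges to percolation on `G₁`
conditioned on the posts at `2`, `5`, `8` being retained. It remains to compare the two reachability
probabilities for the latter.

There `G₁` is a chain of two links between the states at `(1, 2)`, `(3, 5)` and `(6, 8)`, each a
vertex and a post. Consider the correlation between the bunk in which the vertex is reached and the
event that the post is reached. It is negative for `(1, 2)`: if the post at `1` is missing, only the
lower bunk gives access to the post at `2`. A link from `(a, p)` to `(b, q)` enters `b` only from
the post `p`, hence symmetrically in both bunks, and `q` is likelier to be reached when `a` and `b`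
are reached in opposite bunks. So each link flips the sign, and the correlation at `(6, 8)` is
negative again: when `8` is not reached, the upper bunk of `6` is likelier than the lower one. That
is when the bunk of `6` matters most for `9`, since a path through `8` enters `9` symmetrically.
-/

open Finset Filter Topology
open scoped BigOperators

section RandomSubset

variable {ι κ α β : Type*} [DecidableEq ι]

theorem sum_powerset_union {R : Type*} [AddCommMonoid R] {A B : Finset ι} (hAB : Disjoint A B)
    (f : Finset ι → R) :
    ∑ H ∈ (A ∪ B).powerset, f H = ∑ H₁ ∈ A.powerset, ∑ H₂ ∈ B.powerset, f (H₁ ∪ H₂) := by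
  rw [← sum_product']
  refine sum_nbij' (fun H => (H ∩ A, H ∩ B)) (fun p => p.1 ∪ p.2) ?_ ?_ ?_ ?_ ?_
  · simp
  · simp only [mem_product, mem_powerset]
    exact fun p hp => union_subset_union hp.1 hp.2
  · intro H hH
    rw [← inter_union_distrib_left, inter_eq_left.2 (mem_powerset.1 hH)]
  · simp only [mem_product, mem_powerset]
    rintro ⟨H₁, H₂⟩ ⟨h₁, h₂⟩
    have h₁₂ : H₁ ∩ B = ∅ := disjoint_iff_inter_eq_empty.1 (hAB.mono_left h₁)
    have h₂₁ : H₂ ∩ A = ∅ := disjoint_iff_inter_eq_empty.1 (hAB.symm.mono_left h₂)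
    simp [union_inter_distrib_right, inter_eq_left.2, h₁, h₂, h₁₂, h₂₁]
  · intro H hH
    rw [← inter_union_distrib_left, inter_eq_left.2 (mem_powerset.1 hH)]

theorem expect_powerset_union {A B : Finset ι} (hAB : Disjoint A B) (f : Finset ι → ℚ) :
    𝔼 H ∈ (A ∪ B).powerset, f H = 𝔼 H₁ ∈ A.powerset, 𝔼 H₂ ∈ B.powerset, f (H₁ ∪ H₂) := by
  simp only [expect_eq_sum_div_card, sum_powerset_union hAB, card_powerset,
    card_union_of_disjoint hAB, pow_add, ← sum_div, Nat.cast_mul, div_div, mul_comm]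

/-- The function `f` of a random set `H` depends only on `H ∩ A`; for disjoint `A` and `B`,
functions supported on `A` and on `B` are independent. -/
def SupportedOn (A : Finset ι) (f : Finset ι → α) : Prop :=
  ∀ H, f (H ∩ A) = f H

namespace SupportedOn

variable {A B : Finset ι}

theorem mono {f : Finset ι → α} (hf : SupportedOn A f) (hAB : A ⊆ B) : SupportedOn B f :=
  fun H => by rw [← hf, inter_assoc, inter_eq_right.2 hAB, hf]

theorem comp {f : Finset ι → α} (hf : SupportedOn A f) (g : α → β) :
    SupportedOn A fun H => g (f H) :=
  fun H => congrArg g (hf H)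

theorem bind {f : Finset ι → α} {u : Finset ι → α → β} (hf : SupportedOn A f)
    (hu : SupportedOn B u) : SupportedOn (A ∪ B) fun H => u H (f H) := fun H => by
  dsimp only
  rw [hf.mono subset_union_left, hu.mono subset_union_right]

theorem union_right {f : Finset ι → α} (hf : SupportedOn A f) {K : Finset ι}
    (hK : Disjoint K A) (H : Finset ι) : f (H ∪ K) = f H := by
  rw [← hf, union_inter_distrib_right, disjoint_iff_inter_eq_empty.1 hK, union_empty, hf]

theorem union_left {f : Finset ι → α} (hf : SupportedOn A f) {K : Finset ι}
    (hK : Disjoint K A) (H : Finset ι) : f (K ∪ H) = f H := by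
  rw [union_comm, hf.union_right hK]

/-- The tower property: given the state `f H`, the set `H ∩ B` is still uniformly random. -/
theorem sum_bind {R : Type*} [AddCommMonoid R] {f : Finset ι → α} {u : Finset ι → α → β}
    (hf : SupportedOn A f) (hu : SupportedOn B u) (hAB : Disjoint A B) (F : β → R) :
    ∑ H ∈ (A ∪ B).powerset, F (u H (f H)) =
      ∑ H₁ ∈ A.powerset, ∑ H₂ ∈ B.powerset, F (u H₂ (f H₁)) := by
  rw [sum_powerset_union hAB]
  refine sum_congr rfl fun H₁ h₁ => sum_congr rfl fun H₂ h₂ => ?_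
  rw [hf.union_right (hAB.symm.mono_left (mem_powerset.1 h₂)),
    hu.union_left (hAB.mono_left (mem_powerset.1 h₁))]

theorem expect_powerset {f : Finset ι → ℚ} (hf : SupportedOn A f) (s : Finset ι) :
    𝔼 H ∈ s.powerset, f H = 𝔼 H ∈ (s ∩ A).powerset, f H := by
  conv_lhs => rw [← sdiff_union_inter s A, union_comm]
  rw [expect_powerset_union (disjoint_sdiff_inter s A).symm]
  refine expect_congr rfl fun H₁ _ => ?_
  rw [expect_congr rfl fun H₂ h₂ => hf.union_right
    (disjoint_sdiff_self_left.mono_left (mem_powerset.1 h₂)) H₁,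
    expect_const (powerset_nonempty _)]

theorem expect_mul {f g : Finset ι → ℚ} (hf : SupportedOn A f) (hg : SupportedOn B g)
    (hAB : Disjoint A B) (s : Finset ι) :
    𝔼 H ∈ s.powerset, f H * g H = (𝔼 H ∈ s.powerset, f H) * 𝔼 H ∈ s.powerset, g H := by
  have hs : (s \ A) ∩ B = s ∩ B := by
    rw [sdiff_inter_right_comm, sdiff_eq_self_of_disjoint (hAB.symm.mono_left inter_subset_right)]
  rw [hf.expect_powerset s, hg.expect_powerset s, ← hs, ← hg.expect_powerset (s \ A),
    expect_mul_expect]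
  conv_lhs => rw [← sdiff_union_inter s A, union_comm]
  rw [expect_powerset_union (disjoint_sdiff_inter s A).symm]
  refine expect_congr rfl fun H₁ h₁ => expect_congr rfl fun H₂ h₂ => ?_
  rw [mem_powerset] at h₁ h₂
  rw [hf.union_right (disjoint_sdiff_self_left.mono_left h₂),
    hg.union_left (hAB.mono_left (h₁.trans inter_subset_right))]

end SupportedOn

theorem expect_powerset_filter_mem {A : Finset κ} {s : Finset ι} {φ : κ → ι}
    (hφ : Set.InjOn φ A) (hA : A.image φ ⊆ s) (f : Finset κ → ℚ) :
    𝔼 K ∈ s.powerset, f {e ∈ A | φ e ∈ K} = 𝔼 H ∈ A.powerset, f H := by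
  classical
  have hsupp : SupportedOn (A.image φ) fun K => {e ∈ A | φ e ∈ K} := fun K =>
    filter_congr fun e he => by simp [mem_image_of_mem φ he]
  have hcancel {H : Finset κ} (hH : H ⊆ A) : {e ∈ A | φ e ∈ H.image φ} = H := by
    ext e
    simp only [mem_filter, mem_image]
    refine ⟨?_, fun he => ⟨hH he, e, he, rfl⟩⟩
    rintro ⟨he, e', he', h⟩
    exact hφ (hH he') he h ▸ he'
  have hinj : Set.InjOn (image φ) (A.powerset : Set (Finset κ)) := fun H₁ h₁ H₂ h₂ h => by
    rw [← hcancel (mem_powerset.1 h₁), h, hcancel (mem_powerset.1 h₂)]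
  rw [(hsupp.comp f).expect_powerset, inter_eq_right.2 hA, powerset_image, expect_image hinj]
  exact expect_congr rfl fun H hH => by rw [hcancel (mem_powerset.1 hH)]

end RandomSubset

section Pr

variable {V : Type} [DecidableEq V] {s : Finset (BBEdge V)} {A B : Finset (BBEdge V) → Prop}

theorem Pr_eq_expect (s : Finset (BBEdge V)) (A : Finset (BBEdge V) → Prop) [DecidablePred A] :
    Pr s A = 𝔼 H ∈ s.powerset, if A H then 1 else 0 := by
  rw [Pr, expect_eq_sum_div_card, sum_boole]
  congr!

theorem Pr_lt_Pr_iff [DecidablePred A] [DecidablePred B] :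
    Pr s A < Pr s B ↔
      0 < ∑ H ∈ s.powerset, ((if B H then 1 else 0 : ℤ) - if A H then 1 else 0) := by
  have hs : (0 : ℚ) < #s.powerset := by simp [card_powerset]
  rw [sum_sub_distrib, sub_pos, sum_boole, sum_boole, Nat.cast_lt, Pr, Pr,
    div_lt_div_iff_of_pos_right hs, Nat.cast_lt]
  congr!

theorem Pr_nonneg : 0 ≤ Pr s A := by
  unfold Pr; positivity

theorem Pr_mono (h : ∀ H ⊆ s, A H → B H) : Pr s A ≤ Pr s B := by
  unfold Pr
  gcongr with H hH
  exact h H (mem_powerset.1 hH)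

theorem Pr_not (s : Finset (BBEdge V)) (A : Finset (BBEdge V) → Prop) :
    Pr s (fun H => ¬ A H) = 1 - Pr s A := by
  classical
  rw [eq_sub_iff_add_eq, Pr_eq_expect, Pr_eq_expect, ← expect_add_distrib]
  convert expect_const (powerset_nonempty s) (1 : ℚ) with H
  by_cases h : A H <;> simp [h]

theorem Pr_or_le (s : Finset (BBEdge V)) (A B : Finset (BBEdge V) → Prop) :
    Pr s (fun H => A H ∨ B H) ≤ Pr s A + Pr s B := by
  classical
  simp only [Pr_eq_expect, ← expect_add_distrib]
  gcongr with H
  by_cases h : A H <;> by_cases h' : B H <;> simp [h, h']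

theorem Pr_exists_mem_le {κ : Type*} (s : Finset (BBEdge V)) (I : Finset κ)
    (A : κ → Finset (BBEdge V) → Prop) :
    Pr s (fun H => ∃ i ∈ I, A i H) ≤ ∑ i ∈ I, Pr s (A i) := by
  classical
  induction I using Finset.induction_on with
  | empty => simp [Pr]
  | insert i I hi ih =>
    simp only [exists_mem_insert, sum_insert hi]
    exact (Pr_or_le s _ _).trans (by gcongr)

theorem abs_Pr_sub_Pr_le {C : Finset (BBEdge V) → Prop} (h : ∀ H ⊆ s, C H → (A H ↔ B H)) :
    |Pr s A - Pr s B| ≤ Pr s fun H => ¬ C H := by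
  have key {A B : Finset (BBEdge V) → Prop} (h : ∀ H ⊆ s, C H → A H → B H) :
      Pr s A ≤ Pr s B + Pr s fun H => ¬ C H :=
    (Pr_mono fun H hH hA => (em (C H)).imp (h H hH · hA) id).trans (Pr_or_le s _ _)
  rw [abs_sub_le_iff, sub_le_iff_le_add', sub_le_iff_le_add']
  exact ⟨key fun H hH hC => (h H hH hC).1, key fun H hH hC => (h H hH hC).2⟩

theorem Pr_and {S T : Finset (BBEdge V)} (hA : SupportedOn S A) (hB : SupportedOn T B)
    (hST : Disjoint S T) (s : Finset (BBEdge V)) :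
    Pr s (fun H => A H ∧ B H) = Pr s A * Pr s B := by
  classical
  simp only [Pr_eq_expect]
  rw [← (hA.comp fun p => if p then (1 : ℚ) else 0).expect_mul
    (hB.comp fun p => if p then 1 else 0) hST]
  refine expect_congr rfl fun H _ => ?_
  by_cases h : A H <;> by_cases h' : B H <;> simp [h, h']

theorem Pr_subset {S : Finset (BBEdge V)} (hS : S ⊆ s) : Pr s (S ⊆ ·) = (1 / 2) ^ #S := by
  classical
  have hIcc : {H ∈ s.powerset | S ⊆ H} = Icc S s := by
    ext H
    simp [and_comm]
  rw [Pr_eq_expect, expect_eq_sum_div_card, sum_boole, hIcc, card_Icc_finset hS, card_powerset,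
    one_div_pow, div_eq_div_iff (by positivity) (by positivity), one_mul]
  exact_mod_cast pow_sub_mul_pow 2 (card_le_card hS)

theorem supportedOn_subset {S T : Finset (BBEdge V)} (h : S ⊆ T) :
    SupportedOn T (S ⊆ ·) := fun H => by
  simp [subset_inter_iff, h]

theorem Pr_forall_not_subset {κ : Type*} (J : Finset κ) (S : κ → Finset (BBEdge V))
    (hS : ∀ j ∈ J, S j ⊆ s) (hd : (J : Set κ).PairwiseDisjoint S) :
    Pr s (fun H => ∀ j ∈ J, ¬ S j ⊆ H) = ∏ j ∈ J, (1 - (1 / 2) ^ #(S j)) := by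
  classical
  induction J using Finset.induction_on with
  | empty => simp [Pr]
  | insert i J hi ih =>
    have hdisj : Disjoint (S i) (J.biUnion S) := by
      rw [disjoint_biUnion_right]
      exact fun j hj => hd (by simp) (by simp [hj]) (by rintro rfl; exact hi hj)
    have hsupp : SupportedOn (J.biUnion S) fun H => ∀ j ∈ J, ¬ S j ⊆ H := fun H => by
      simp +contextual [subset_inter_iff, subset_biUnion_of_mem]
    simp only [forall_mem_insert]
    rw [Pr_and ((supportedOn_subset Subset.rfl).comp Not) hsupp hdisj, Pr_not,
      Pr_subset (hS i (by simp)), prod_insert hi,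
      ih (fun j hj => hS j (by simp [hj])) (hd.subset (by simp))]

end Pr

section Bunkbed

variable {V : Type} [DecidableEq V] {Vs : Finset V} {E : Finset (V × V)} {H : Finset (BBEdge V)}

@[simp]
theorem vert_mem_bbEdges {x : V} : .vert x ∈ bbEdges Vs E ↔ x ∈ Vs := by
  simp [bbEdges]

@[simp]
theorem horiz_mem_bbEdges {x y : V} {ε : Bool} : .horiz x y ε ∈ bbEdges Vs E ↔ (x, y) ∈ E := by
  cases ε <;> simp [bbEdges]

theorem bbReach.trans {a b c : V × Bool} (h : bbReach H a b) (h' : bbReach H b c) :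
    bbReach H a c :=
  Relation.ReflTransGen.trans h h'

theorem bbReach_of_vert {x : V} (h : .vert x ∈ H) (ε δ : Bool) : bbReach H (x, ε) (x, δ) := by
  obtain rfl | hεδ := eq_or_ne ε δ
  · exact .refl
  · exact .single (.inl ⟨rfl, hεδ, h⟩)

theorem bbReach_of_horiz {x y : V} {ε : Bool} (h : .horiz x y ε ∈ H) :
    bbReach H (x, ε) (y, ε) :=
  .single (.inr ⟨rfl, h⟩)

/-- Opening the posts of a bunkbed subgraph at all vertices of `T`. Percolation conditioned on
these posts being retained is percolation on the other edges followed by `withPosts`. -/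
def withPosts (T : Finset V) (H : Finset (BBEdge V)) : Finset (BBEdge V) :=
  H ∪ T.image .vert

@[simp]
theorem vert_mem_withPosts {T : Finset V} {x : V} :
    .vert x ∈ withPosts T H ↔ .vert x ∈ H ∨ x ∈ T := by
  simp [withPosts]

@[simp]
theorem horiz_mem_withPosts {T : Finset V} {x y : V} {ε : Bool} :
    .horiz x y ε ∈ withPosts T H ↔ .horiz x y ε ∈ H := by
  simp [withPosts]

end Bunkbed

section Gadgets

/-- The five edges through the middle vertex `i_j` that the event `C` asks to be retained. -/
def gadgetPath (i j : ℕ) : Finset (BBEdge GV) :=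
  {.vert (.mid i j), .horiz (.ga i) (.mid i j) false, .horiz (.ga i) (.mid i j) true,
    .horiz (.mid i j) (.gb i) false, .horiz (.mid i j) (.gb i) true}

theorem card_gadgetPath (i j : ℕ) : #(gadgetPath i j) = 5 := by
  simp [gadgetPath]

theorem disjoint_gadgetPath {i j j' : ℕ} (h : j ≠ j') :
    Disjoint (gadgetPath i j) (gadgetPath i j') := by
  simp [gadgetPath, h.symm]

theorem gadgetPath_subset_bbEdges {k i j : ℕ} (hi : i ∈ gset) (hj : j ∈ Icc 1 k) :
    gadgetPath i j ⊆ bbEdges (Vs2 k) (E2 k) := by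
  have hij : (i, j) ∈ gset ×ˢ Icc 1 k := mk_mem_product hi hj
  have hmid : GV.mid i j ∈ Vs2 k := mem_union_right _ (mem_image_of_mem _ hij)
  have hin : (GV.ga i, GV.mid i j) ∈ E2 k :=
    mem_union_left _ (mem_union_right _ (mem_image_of_mem _ hij))
  have hout : (GV.mid i j, GV.gb i) ∈ E2 k := mem_union_right _ (mem_image_of_mem _ hij)
  simp [gadgetPath, insert_subset_iff, hmid, hin, hout]

theorem Cev_iff {k : ℕ} {H : Finset (BBEdge GV)} :
    Cev k H ↔ ∀ i ∈ gset, ∃ j ∈ Icc 1 k, gadgetPath i j ⊆ H := by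
  simp [Cev, gadgetPath, insert_subset_iff]

theorem Pr_not_Cev_le (k : ℕ) :
    Pr (bbEdges (Vs2 k) (E2 k)) (fun H => ¬ Cev k H) ≤ 3 * (31 / 32) ^ k := by
  have hgadget : ∀ i ∈ gset,
      Pr (bbEdges (Vs2 k) (E2 k)) (fun H => ∀ j ∈ Icc 1 k, ¬ gadgetPath i j ⊆ H) =
        (31 / 32) ^ k := by
    intro _ hi
    rw [Pr_forall_not_subset _ _ (fun _ => gadgetPath_subset_bbEdges hi)
      fun _ _ _ _ => disjoint_gadgetPath]
    simp only [card_gadgetPath, prod_const, Nat.card_Icc, Nat.add_sub_cancel]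
    norm_num
  calc
    _ = Pr (bbEdges (Vs2 k) (E2 k)) fun H =>
          ∃ i ∈ gset, ∀ j ∈ Icc 1 k, ¬ gadgetPath i j ⊆ H := by
      simp only [Cev_iff]
      push Not
      rfl
    _ ≤ _ := Pr_exists_mem_le _ _ _
    _ = ∑ _i ∈ gset, (31 / 32) ^ k := sum_congr rfl hgadget
    _ = 3 * (31 / 32) ^ k := by simp [gset]

theorem tendsto_Pr_not_Cev :
    Tendsto (fun k => Pr (bbEdges (Vs2 k) (E2 k)) fun H => ¬ Cev k H) atTop (𝓝 0) := by
  refine tendsto_of_tendsto_of_tendsto_of_le_of_le tendsto_const_nhds ?_ (fun k => Pr_nonneg)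
    Pr_not_Cev_le
  simpa using (tendsto_pow_atTop_nhds_zero_of_lt_one (by norm_num : (0 : ℚ) ≤ 31 / 32)
    (by norm_num)).const_mul 3

end Gadgets

section Contraction

variable {k : ℕ} {K : Finset (BBEdge GV)}

theorem tgtV_injective : Function.Injective tgtV := fun x y h => by
  unfold tgtV at h
  split_ifs at h <;> simpa using h

theorem srcV_injective : Function.Injective srcV := fun x y h => by
  unfold srcV at h
  split_ifs at h <;> simpa using h

/-- The edge of the bunkbed graph of `G₂ᵏ` that replaces an edge of the bunkbed graph of `G₁`. -/
def blowUp : BBEdge ℕ → BBEdge GV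
  | .horiz x y ε => .horiz (srcV x) (tgtV y) ε
  | .vert w => .vert (.orig w)

theorem blowUp_injective : Function.Injective blowUp := by
  rintro (⟨x, y, ε⟩ | w) (⟨x', y', ε'⟩ | w') h <;>
    simp_all [blowUp, srcV_injective.eq_iff, tgtV_injective.eq_iff]

theorem image_blowUp_subset_bbEdges (k : ℕ) :
    (bbEdges (V1 \ T1) E1).image blowUp ⊆ bbEdges (Vs2 k) (E2 k) := by
  rw [image_subset_iff]
  rintro (⟨x, y, ε⟩ | w) h
  · rw [horiz_mem_bbEdges] at h
    rw [blowUp, horiz_mem_bbEdges]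
    exact mem_union_left _ (mem_union_left _ (mem_image_of_mem _ h))
  · rw [vert_mem_bbEdges] at h
    rw [blowUp, vert_mem_bbEdges]
    exact mem_union_left _ (mem_union_left _ (mem_union_left _ (mem_image_of_mem _ h)))

/-- The subgraph of the bunkbed graph of `G₁` obtained from a subgraph of that of `G₂ᵏ` by
contracting each gadget to a vertex with a retained post. -/
def contraction (K : Finset (BBEdge GV)) : Finset (BBEdge ℕ) :=
  withPosts T1 {e ∈ bbEdges (V1 \ T1) E1 | blowUp e ∈ K}

theorem Cev.bbReach_gadget (hC : Cev k K) {i : ℕ} (hi : i ∈ gset) (ε δ : Bool) :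
    bbReach K (.ga i, ε) (.gb i, δ) := by
  obtain ⟨j, -, hpost, hin₀, hin₁, hout₀, hout₁⟩ := hC i hi
  have hin : .horiz (.ga i) (.mid i j) ε ∈ K := by cases ε <;> assumption
  have hout : .horiz (.mid i j) (.gb i) δ ∈ K := by cases δ <;> assumption
  exact (bbReach_of_horiz hin).trans ((bbReach_of_vert hpost ε δ).trans (bbReach_of_horiz hout))

/-- The vertex of `G₁` to which a vertex of `G₂ᵏ` is contracted. -/
def GV.base : GV → ℕ
  | .orig n => n
  | .ga i => i
  | .gb i => i
  | .mid i _ => i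

@[simp]
theorem GV.base_srcV (x : ℕ) : (srcV x).base = x := by
  unfold srcV; split_ifs <;> rfl

@[simp]
theorem GV.base_tgtV (x : ℕ) : (tgtV x).base = x := by
  unfold tgtV; split_ifs <;> rfl

theorem bbStep.contraction (hK : K ⊆ bbEdges (Vs2 k) (E2 k)) {a b : GV × Bool}
    (h : bbStep K a b) :
    bbReach (contraction K) (a.1.base, a.2) (b.1.base, b.2) := by
  obtain ⟨v, ε⟩ := a
  obtain ⟨w, δ⟩ := b
  obtain ⟨rfl, -, hv⟩ | ⟨rfl, he⟩ := h
  · refine bbReach_of_vert ?_ ε δ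
    have hmem := vert_mem_bbEdges.1 (hK hv)
    simp only [Vs2, mem_union, mem_image] at hmem
    obtain ((⟨_, hn, rfl⟩ | ⟨_, hi, rfl⟩) | ⟨_, hi, rfl⟩) | ⟨_, hp, rfl⟩ := hmem
    · exact vert_mem_withPosts.2 (.inl (mem_filter.2 ⟨vert_mem_bbEdges.2 hn, hv⟩))
    · exact vert_mem_withPosts.2 (.inr hi)
    · exact vert_mem_withPosts.2 (.inr hi)
    · exact vert_mem_withPosts.2 (.inr (mem_product.1 hp).1)
  · have hmem := horiz_mem_bbEdges.1 (hK he)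
    simp only [E2, mem_union, mem_image, Prod.mk.injEq] at hmem
    obtain (⟨⟨x, y⟩, hxy, rfl, rfl⟩ | ⟨p, -, rfl, rfl⟩) | ⟨p, -, rfl, rfl⟩ := hmem
    · refine bbReach_of_horiz (horiz_mem_withPosts.2 (mem_filter.2 ⟨?_, ?_⟩))
      · simpa using hxy
      · simpa [blowUp] using he
    · exact .refl
    · exact .refl

theorem bbReach.of_contraction (hC : Cev k K) {x y : ℕ} {δ ε ε' : Bool} (hx : x ∉ gset)
    (h : bbReach (contraction K) (x, δ) (y, ε)) (hε : y ∉ gset → ε' = ε) :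
    bbReach K (.orig x, δ) (srcV y, ε') := by
  generalize hb : (y, ε) = b at h
  induction h generalizing y ε ε' with
  | refl =>
    obtain ⟨rfl, rfl⟩ := Prod.mk.inj hb
    rw [hε hx, srcV, if_neg hx]
    exact .refl
  | @tail a b hab hstep ih =>
    subst hb
    obtain ⟨z, η⟩ := a
    obtain ⟨rfl, -, hv⟩ | ⟨rfl, he⟩ := hstep
    · obtain hmem | hz := vert_mem_withPosts.1 hv
      · obtain ⟨hzV, hzK⟩ := mem_filter.1 hmem
        have hz : z ∉ gset := (mem_sdiff.1 (vert_mem_bbEdges.1 hzV)).2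
        refine (ih (fun _ => rfl) rfl).trans ?_
        rw [srcV, if_neg hz, hε hz]
        exact bbReach_of_vert hzK η ε
      · exact ih (fun hz' => absurd hz hz') rfl
    · have hzK : .horiz (srcV z) (tgtV y) η ∈ K :=
        (mem_filter.1 (horiz_mem_withPosts.1 he)).2
      refine ((ih (fun _ => rfl) rfl).trans (bbReach_of_horiz hzK)).trans ?_
      by_cases hy : y ∈ gset
      · rw [tgtV, srcV, if_pos hy, if_pos hy]
        exact hC.bbReach_gadget hy η ε'
      · rw [tgtV, srcV, if_neg hy, if_neg hy, hε hy]
        exact .refl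

theorem bbReach_contraction_iff (hK : K ⊆ bbEdges (Vs2 k) (E2 k)) (hC : Cev k K) {x y : ℕ}
    (hx : x ∉ gset) (hy : y ∉ gset) {δ ε : Bool} :
    bbReach (contraction K) (x, δ) (y, ε) ↔ bbReach K (.orig x, δ) (.orig y, ε) := by
  constructor <;> intro h
  · simpa [srcV, hy] using h.of_contraction hC hx fun _ => rfl
  · exact Relation.ReflTransGen.lift' (fun a : GV × Bool => (a.1.base, a.2))
      (fun _ _ => bbStep.contraction hK) _ _ h

theorem Pr_contraction (k : ℕ) (A : Finset (BBEdge ℕ) → Prop) :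
    Pr (bbEdges (Vs2 k) (E2 k)) (fun K => A (contraction K)) =
      Pr (bbEdges (V1 \ T1) E1) fun H => A (withPosts T1 H) := by
  classical
  simp only [Pr_eq_expect, contraction]
  exact expect_powerset_filter_mem blowUp_injective.injOn (image_blowUp_subset_bbEdges k)
    fun H => if A (withPosts T1 H) then 1 else 0

theorem tendsto_Pr_bbReach {x y : ℕ} (hx : x ∉ gset) (hy : y ∉ gset) (δ ε : Bool) :
    Tendsto (fun k => Pr (bbEdges (Vs2 k) (E2 k)) fun K => bbReach K (.orig x, δ) (.orig y, ε))
      atTop (𝓝 (Pr (bbEdges (V1 \ T1) E1) fun H => bbReach (withPosts T1 H) (x, δ) (y, ε))) := by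
  set p := Pr (bbEdges (V1 \ T1) E1) fun H => bbReach (withPosts T1 H) (x, δ) (y, ε)
  have hclose (k : ℕ) : |Pr (bbEdges (Vs2 k) (E2 k))
      (fun K => bbReach K (.orig x, δ) (.orig y, ε)) - p| ≤
        Pr (bbEdges (Vs2 k) (E2 k)) fun K => ¬ Cev k K := by
    rw [show p = _ from (Pr_contraction k (bbReach · (x, δ) (y, ε))).symm]
    exact abs_Pr_sub_Pr_le fun K hK hC => (bbReach_contraction_iff hK hC hx hy).symm
  have hlower := (tendsto_const_nhds (x := p)).sub tendsto_Pr_not_Cev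
  have hupper := (tendsto_const_nhds (x := p)).add tendsto_Pr_not_Cev
  rw [sub_zero] at hlower
  rw [add_zero] at hupper
  refine tendsto_of_tendsto_of_tendsto_of_le_of_le hlower hupper (fun k => ?_) fun k => ?_
  · exact sub_le_comm.1 (abs_sub_le_iff.1 (hclose k)).2
  · exact sub_le_iff_le_add'.1 (abs_sub_le_iff.1 (hclose k)).1

end Contraction

section Exploration

variable {V : Type} [DecidableEq V] {H K : Finset (BBEdge V)} {Vs : Finset V} {E : Finset (V × V)}

/-- The set of bunks in which the edge `(x, y)` is retained. -/
def copies (H : Finset (BBEdge V)) (x y : V) : Finset Bool :=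
  {ε | .horiz x y ε ∈ H}

@[simp]
theorem copies_union (x y : V) : copies (H ∪ K) x y = copies H x y ∪ copies K x y := by
  ext; simp [copies]

@[simp]
theorem copies_image_horiz (U : Finset Bool) (x y x' y' : V) :
    copies (U.image (.horiz x y)) x' y' = if x = x' ∧ y = y' then U else ∅ := by
  split_ifs with h <;> ext <;> simp_all [copies]

@[simp]
theorem copies_vert (x y z : V) : copies {.vert z} x y = ∅ := by
  simp [copies]

theorem vert_notMem_image_horiz (U : Finset Bool) (x y z : V) :
    .vert z ∉ U.image (BBEdge.horiz x y) := by
  simp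

theorem copies_withPosts (T : Finset V) (x y : V) :
    copies (withPosts T H) x y = copies H x y := by
  simp [copies]

/-- The set of bunks of a vertex with a retained post that can be reached, if the post is entered
in the bunks belonging to `S`. -/
def saturate (S : Finset Bool) : Finset Bool :=
  if S.Nonempty then univ else ∅

/-- The set of bunks of `x` that can be reached using the post at `x`, if retained, when `x` is
entered in the bunks belonging to `S`. -/
def climb (H : Finset (BBEdge V)) (x : V) (S : Finset Bool) : Finset Bool :=
  if .vert x ∈ H then saturate S else S

theorem mem_climb {x : V} {S : Finset Bool} {ε : Bool} :
    ε ∈ climb H x S ↔ ∃ δ ∈ S, δ = ε ∨ .vert x ∈ H := by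
  unfold climb saturate
  split_ifs <;> simp_all [Finset.Nonempty]

theorem climb_withPosts_of_mem {T : Finset V} {x : V} (hx : x ∈ T) (S : Finset Bool) :
    climb (withPosts T H) x S = saturate S := by
  simp [climb, hx]

theorem climb_withPosts_of_notMem {T : Finset V} {x : V} (hx : x ∉ T) (S : Finset Bool) :
    climb (withPosts T H) x S = climb H x S := by
  simp [climb, hx]

open Classical in
/-- The set of bunks in which the vertex `y` is reached from `a` in the subgraph `H`. -/
noncomputable def reachedBunks (H : Finset (BBEdge V)) (a : V × Bool) (y : V) : Finset Bool :=
  {ε | bbReach H a (y, ε)}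

@[simp]
theorem mem_reachedBunks {a : V × Bool} {y : V} {ε : Bool} :
    ε ∈ reachedBunks H a y ↔ bbReach H a (y, ε) := by
  simp [reachedBunks]

theorem reachedBunks_eq_climb (hE : ∀ x y ε, .horiz x y ε ∈ H → (x, y) ∈ E) (a : V × Bool)
    (y : V) :
    reachedBunks H a y = climb H y ((if y = a.1 then {a.2} else ∅) ∪
      {e ∈ E | e.2 = y}.biUnion fun e => reachedBunks H a e.1 ∩ copies H e.1 y) := by
  have hentry {x : V} {δ : Bool} (h : bbReach H a (x, δ)) (he : .horiz x y δ ∈ H) :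
      δ ∈ {e ∈ E | e.2 = y}.biUnion fun e => reachedBunks H a e.1 ∩ copies H e.1 y :=
    mem_biUnion.2 ⟨(x, y), by simpa using hE _ _ _ he, by simpa [copies] using ⟨h, he⟩⟩
  ext ε
  rw [mem_reachedBunks, mem_climb]
  constructor
  · intro h
    generalize hb : (y, ε) = b at h
    induction h generalizing ε with
    | refl => exact ⟨ε, by simp [← hb], .inl rfl⟩
    | @tail b c hab hstep ih =>
      subst hb
      obtain ⟨z, η⟩ := b
      obtain ⟨rfl, -, hv⟩ | ⟨rfl, he⟩ := hstep
      · obtain ⟨δ, hδ, -⟩ := ih η rfl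
        exact ⟨δ, hδ, .inr hv⟩
      · exact ⟨η, mem_union_right _ (hentry hab he), .inl rfl⟩
  · rintro ⟨δ, hδ, hδε⟩
    have hreach : bbReach H a (y, δ) := by
      obtain hδ | hδ := mem_union.1 hδ
      · split_ifs at hδ with hy
        · rw [hy, mem_singleton.1 hδ]
          exact .refl
        · simp at hδ
      · obtain ⟨⟨x, _⟩, -, hδ⟩ := mem_biUnion.1 hδ
        simp only [mem_inter, mem_reachedBunks, copies, mem_filter_univ] at hδ
        exact hδ.1.trans (bbReach_of_horiz hδ.2)
    obtain rfl | hv := hδε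
    · exact hreach
    · exact hreach.trans (bbReach_of_vert hv δ ε)

theorem disjoint_bbEdges {Vs' : Finset V} {E' : Finset (V × V)} (hV : Disjoint Vs Vs')
    (hE : Disjoint E E') : Disjoint (bbEdges Vs E) (bbEdges Vs' E') := by
  rw [disjoint_left] at hV hE ⊢
  rintro (_ | _) he
  · simpa using hE (horiz_mem_bbEdges.1 he)
  · simpa using hV (vert_mem_bbEdges.1 he)

theorem sum_powerset_bbEdges_singleton {R : Type*} [AddCommMonoid R] (x : V)
    (f : Finset (BBEdge V) → R) :
    ∑ H ∈ (bbEdges {x} ∅).powerset, f H = f ∅ + f {.vert x} := by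
  have hx : bbEdges {x} ∅ = insert (.vert x) ∅ := by simp [bbEdges]
  rw [hx, sum_powerset_insert (notMem_empty _), powerset_empty, sum_singleton, sum_singleton,
    insert_empty_eq]

theorem sum_powerset_bbEdges_insert {R : Type*} [AddCommMonoid R] {x y : V} (hxy : (x, y) ∉ E)
    (f : Finset (BBEdge V) → R) :
    ∑ H ∈ (bbEdges Vs (insert (x, y) E)).powerset, f H =
      ∑ H ∈ (bbEdges Vs E).powerset, ∑ U : Finset Bool, f (H ∪ U.image (.horiz x y)) := by
  have hinsert : bbEdges Vs (insert (x, y) E) =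
      bbEdges Vs E ∪ univ.image (BBEdge.horiz x y) := by
    ext (⟨x', y', _ | _⟩ | _) <;> simp [eq_comm]
  have hdisj : Disjoint (bbEdges Vs E) (univ.image (BBEdge.horiz x y)) := by
    simp [disjoint_right, hxy]
  rw [hinsert, sum_powerset_union hdisj]
  refine sum_congr rfl fun H _ => ?_
  rw [powerset_image, sum_image, powerset_univ]
  exact (image_injective fun ε δ h => by simpa using h).injOn

end Exploration

section Correlation

/-- The contribution of a vertex reached in the bunks `S` to the signed count of the
configurations reaching it in the upper, minus those reaching it in the lower bunk. -/
def adv (S : Finset Bool) : ℤ :=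
  (if true ∈ S then 1 else 0) - if false ∈ S then 1 else 0

/-- The contribution of a state `s` to the (unnormalized) correlation between the bunk in which a
vertex is reached and the event that a post is reached. In a state, `s.1` is the set of reached
bunks of the vertex, and `s.2` the set of bunks in which the post is entered. -/
def corr (s : Finset Bool × Finset Bool) : ℤ :=
  adv s.1 * if s.2.Nonempty then 1 else 0

variable {V : Type} [DecidableEq V]

/-- The bunks of `b` reached from the post `p` over the edge `(p, b)`, where `P` is the set of bunks
in which `p` is entered. -/
def fromPost (H : Finset (BBEdge V)) (p b : V) (P : Finset Bool) : Finset Bool :=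
  climb H b (saturate P ∩ copies H p b)

/-- The bunks in which the post `q` is entered over the path `c → q` from `a` and `b`, where `A` and
`B` are the sets of reached bunks of `a` and `b`. -/
def toPost (H : Finset (BBEdge V)) (a b c q : V) (A B : Finset Bool) : Finset Bool :=
  climb H c (A ∩ copies H a c ∪ B ∩ copies H b c) ∩ copies H c q

/-- The edges of one link of `G₁`, leading from a vertex `a` and a post `p` to a vertex `b` and a
post `q`. -/
def linkEdges (a p b c q : V) : Finset (BBEdge V) :=
  bbEdges {b} {(p, b)} ∪ bbEdges {c} {(a, c), (b, c), (c, q)}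

/-- The state at `(b, q)` produced by one link of `G₁` from a state `s` at `(a, p)`. -/
def link (H : Finset (BBEdge V)) (a p b c q : V) (s : Finset Bool × Finset Bool) :
    Finset Bool × Finset Bool :=
  (fromPost H p b s.2, toPost H a b c q s.1 (fromPost H p b s.2))

theorem adv_saturate (S : Finset Bool) : adv (saturate S) = 0 := by
  unfold adv saturate
  split_ifs <;> simp_all

theorem sum_adv_mul (F : Finset Bool → ℤ) : ∑ U, adv U * F U = F {true} - F {false} := by
  have huniv : (univ : Finset (Finset Bool)) = {∅, {false}, {true}, univ} := by decide
  rw [huniv, sum_insert (by decide), sum_insert (by decide), sum_insert (by decide), sum_singleton]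
  simp [adv, sub_eq_neg_add]

theorem sum_adv_fromPost_mul (p b : V) (P : Finset Bool) (F : Finset Bool → ℤ) :
    ∑ H ∈ (bbEdges {b} {(p, b)}).powerset, adv (fromPost H p b P) * F (fromPost H p b P) =
      if P.Nonempty then F {true} - F {false} else 0 := by
  rw [← insert_empty_eq (p, b), sum_powerset_bbEdges_insert (notMem_empty _),
    sum_powerset_bbEdges_singleton]
  by_cases hP : P.Nonempty
  · have hfree (U : Finset Bool) : fromPost (∅ ∪ U.image (.horiz p b)) p b P = U := by
      simp only [fromPost, climb, saturate, hP, if_true, univ_inter, copies_image_horiz, and_self,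
        empty_union, vert_notMem_image_horiz, if_false]
    have hpost (U : Finset Bool) :
        adv (fromPost ({.vert b} ∪ U.image (.horiz p b)) p b P) = 0 := by
      simp [fromPost, climb, adv_saturate]
    simp only [hfree, hpost, sum_adv_mul, zero_mul, sum_const_zero, add_zero, hP, if_true]
  · simp [hP, fromPost, climb, saturate, adv]

-- If `a` and `b` are reached in opposite bunks, the two ways into `c` do not overlap, which makes
-- it likelier that `q` is entered.
theorem sum_toPost_sub {a b c : V} (hab : a ≠ b) (hac : a ≠ c) (hbc : b ≠ c) (q : V)
    (A : Finset Bool) :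
    ∑ H ∈ (bbEdges {c} {(a, c), (b, c), (c, q)}).powerset,
      ((if (toPost H a b c q A {true}).Nonempty then 1 else 0 : ℤ) -
        if (toPost H a b c q A {false}).Nonempty then 1 else 0) = -4 * adv A := by
  simp only [← insert_empty_eq (c, q)]
  rw [sum_powerset_bbEdges_insert (by simp [hab, hac]), sum_powerset_bbEdges_insert (by simp [hbc]),
    sum_powerset_bbEdges_insert (notMem_empty _), sum_powerset_bbEdges_singleton]
  simp only [toPost, climb, copies_union, copies_image_horiz, copies_vert, hab, hab.symm, hac,
    hac.symm, hbc, hbc.symm, mem_union, vert_notMem_image_horiz, mem_singleton, or_false, or_self,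
    and_true, false_and, and_self, if_false, if_true, empty_union, union_empty]
  revert A
  decide +kernel

theorem supportedOn_fromPost (p b : V) :
    SupportedOn (bbEdges {b} {(p, b)}) (fromPost · p b) := fun H => by
  ext; simp [fromPost, climb, copies]

theorem supportedOn_toPost (a b c q : V) :
    SupportedOn (bbEdges {c} {(a, c), (b, c), (c, q)}) (toPost · a b c q) := fun H => by
  ext; simp [toPost, climb, copies]

theorem supportedOn_link (a p b c q : V) :
    SupportedOn (linkEdges a p b c q) (link · a p b c q) := fun H => by
  ext <;> simp [link, linkEdges, fromPost, toPost, climb, copies]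

theorem sum_linkEdges {a p b c q : V} (hbc : b ≠ c) (hpc : p ≠ c) (s : Finset Bool × Finset Bool)
    (F : Finset Bool × Finset Bool → ℤ) :
    ∑ H ∈ (linkEdges a p b c q).powerset, F (link H a p b c q s) =
      ∑ H₁ ∈ (bbEdges {b} {(p, b)}).powerset,
        ∑ H₂ ∈ (bbEdges {c} {(a, c), (b, c), (c, q)}).powerset,
          F (fromPost H₁ p b s.2, toPost H₂ a b c q s.1 (fromPost H₁ p b s.2)) := by
  have hdisj : Disjoint (bbEdges {b} {(p, b)}) (bbEdges {c} {(a, c), (b, c), (c, q)}) :=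
    disjoint_bbEdges (by simpa) (by simp [hbc, hpc])
  exact ((supportedOn_fromPost p b).comp (· s.2)).sum_bind
    ((supportedOn_toPost a b c q).comp fun g B => (B, g s.1 B)) hdisj F

theorem sum_adv_link {a p b c q : V} (hbc : b ≠ c) (hpc : p ≠ c) (s : Finset Bool × Finset Bool) :
    ∑ H ∈ (linkEdges a p b c q).powerset, adv (link H a p b c q s).1 = 0 := by
  rw [sum_linkEdges hbc hpc s fun t => adv t.1]
  simp only [sum_const, nsmul_eq_mul, mul_comm _ (adv _)]
  simpa using sum_adv_fromPost_mul p b s.2 fun _ =>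
    (#(bbEdges {c} {(a, c), (b, c), (c, q)}).powerset : ℤ)

theorem sum_corr_link {a p b c q : V} (hab : a ≠ b) (hac : a ≠ c) (hbc : b ≠ c) (hpc : p ≠ c)
    (s : Finset Bool × Finset Bool) :
    ∑ H ∈ (linkEdges a p b c q).powerset, corr (link H a p b c q s) = -4 * corr s := by
  rw [sum_linkEdges hbc hpc s corr]
  simp only [corr, ← mul_sum]
  rw [sum_adv_fromPost_mul p b s.2 fun B => ∑ H ∈ (bbEdges {c} {(a, c), (b, c), (c, q)}).powerset,
    if (toPost H a b c q s.1 B).Nonempty then (1 : ℤ) else 0, ← sum_sub_distrib,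
    sum_toPost_sub hab hac hbc]
  split_ifs <;> simp

/-- The state of the percolation on `G₁` at vertex `1` and post `2`. -/
def initialState (H : Finset (BBEdge ℕ)) : Finset Bool × Finset Bool :=
  (climb H 1 {false}, climb H 1 {false} ∩ copies H 1 2)

theorem sum_corr_initialState :
    ∑ H ∈ (bbEdges {1} {(1, 2)}).powerset, corr (initialState H) = -2 := by
  decide +kernel

/-- The bunks of `9` reached from the state `s` at vertex `6` and post `8`. -/
def finalBunks (H : Finset (BBEdge ℕ)) (s : Finset Bool × Finset Bool) : Finset Bool :=
  climb H 9 (s.1 ∩ copies H 6 9 ∪ saturate s.2 ∩ copies H 8 9)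

theorem sum_adv_finalBunks (s : Finset Bool × Finset Bool) :
    ∑ H ∈ (bbEdges {9} {(6, 9), (8, 9)}).powerset, adv (finalBunks H s) =
      8 * adv s.1 - 4 * corr s := by
  revert s
  decide +kernel

theorem supportedOn_initialState : SupportedOn (bbEdges {1} {(1, 2)}) initialState := fun H => by
  simp [initialState, climb, copies]

theorem supportedOn_finalBunks :
    SupportedOn (bbEdges {9} {(6, 9), (8, 9)}) finalBunks := fun H => by
  ext; simp [finalBunks, climb, copies]

theorem reachedBunks_withPosts {H : Finset (BBEdge ℕ)} (hH : H ⊆ bbEdges (V1 \ T1) E1) :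
    reachedBunks (withPosts T1 H) (1, false) 9 =
      finalBunks H (link H 3 5 6 7 8 (link H 1 2 3 4 5 (initialState H))) := by
  set R := reachedBunks (withPosts T1 H) (1, false)
  have hrec (y : ℕ) : R y = climb (withPosts T1 H) y ((if y = 1 then {false} else ∅) ∪
      {e ∈ E1 | e.2 = y}.biUnion fun e => R e.1 ∩ copies H e.1 y) := by
    have hE (x y ε) (h : .horiz x y ε ∈ withPosts T1 H) : (x, y) ∈ E1 :=
      horiz_mem_bbEdges.1 (hH (horiz_mem_withPosts.1 h))
    simpa only [copies_withPosts] using reachedBunks_eq_climb hE (1, false) y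
  have h₁ : R 1 = climb H 1 {false} := by
    rw [hrec, climb_withPosts_of_notMem (by decide)]; simp [E1, filter_insert, filter_singleton]
  have h₂ : R 2 = saturate (R 1 ∩ copies H 1 2) := by
    rw [hrec, climb_withPosts_of_mem (by decide)]; simp [E1, filter_insert, filter_singleton]
  have h₃ : R 3 = climb H 3 (R 2 ∩ copies H 2 3) := by
    rw [hrec, climb_withPosts_of_notMem (by decide)]; simp [E1, filter_insert, filter_singleton]
  have h₄ : R 4 = climb H 4 (R 1 ∩ copies H 1 4 ∪ R 3 ∩ copies H 3 4) := by
    rw [hrec, climb_withPosts_of_notMem (by decide)]; simp [E1, filter_insert, filter_singleton]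
  have h₅ : R 5 = saturate (R 4 ∩ copies H 4 5) := by
    rw [hrec, climb_withPosts_of_mem (by decide)]; simp [E1, filter_insert, filter_singleton]
  have h₆ : R 6 = climb H 6 (R 5 ∩ copies H 5 6) := by
    rw [hrec, climb_withPosts_of_notMem (by decide)]; simp [E1, filter_insert, filter_singleton]
  have h₇ : R 7 = climb H 7 (R 3 ∩ copies H 3 7 ∪ R 6 ∩ copies H 6 7) := by
    rw [hrec, climb_withPosts_of_notMem (by decide)]; simp [E1, filter_insert, filter_singleton]
  have h₈ : R 8 = saturate (R 7 ∩ copies H 7 8) := by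
    rw [hrec, climb_withPosts_of_mem (by decide)]; simp [E1, filter_insert, filter_singleton]
  have h₉ : R 9 = climb H 9 (R 6 ∩ copies H 6 9 ∪ R 8 ∩ copies H 8 9) := by
    rw [hrec, climb_withPosts_of_notMem (by decide)]; simp [E1, filter_insert, filter_singleton]
  rw [h₉, h₈, h₇, h₆, h₅, h₄, h₃, h₂, h₁]
  rfl

theorem sum_adv_reachedBunks :
    ∑ H ∈ (bbEdges (V1 \ T1) E1).powerset, adv (reachedBunks (withPosts T1 H) (1, false) 9) =
      128 := by
  have hedges : bbEdges (V1 \ T1) E1 = bbEdges {1} {(1, 2)} ∪ linkEdges 1 2 3 4 5 ∪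
      linkEdges 3 5 6 7 8 ∪ bbEdges {9} {(6, 9), (8, 9)} := by
    decide +kernel
  have hsupp₁ := supportedOn_initialState.bind (supportedOn_link 1 2 3 4 5)
  have hsupp₂ := hsupp₁.bind (supportedOn_link 3 5 6 7 8)
  rw [sum_congr rfl fun H hH => by rw [reachedBunks_withPosts (mem_powerset.1 hH)], hedges,
    hsupp₂.sum_bind supportedOn_finalBunks (by decide +kernel) adv]
  simp only [sum_adv_finalBunks]
  rw [hsupp₁.sum_bind (supportedOn_link 3 5 6 7 8) (by decide +kernel)
    fun s => 8 * adv s.1 - 4 * corr s]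
  simp only [sum_sub_distrib, ← mul_sum, sum_adv_link (show 6 ≠ 7 by decide) (show 5 ≠ 7 by decide),
    sum_corr_link (show 3 ≠ 6 by decide) (show 3 ≠ 7 by decide) (show 6 ≠ 7 by decide)
      (show 5 ≠ 7 by decide)]
  rw [supportedOn_initialState.sum_bind (supportedOn_link 1 2 3 4 5) (by decide +kernel) corr]
  simp only [sum_corr_link (show 1 ≠ 3 by decide) (show 1 ≠ 4 by decide) (show 3 ≠ 4 by decide)
    (show 2 ≠ 4 by decide), ← mul_sum, sum_corr_initialState]
  simp

theorem Pr_bbReach_withPosts_lt :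
    Pr (bbEdges (V1 \ T1) E1) (fun H => bbReach (withPosts T1 H) (1, false) (9, false)) <
      Pr (bbEdges (V1 \ T1) E1) (fun H => bbReach (withPosts T1 H) (1, false) (9, true)) := by
  classical
  have hsum := sum_adv_reachedBunks
  simp only [adv, mem_reachedBunks] at hsum
  rw [Pr_lt_Pr_iff]
  convert (by decide : (0 : ℤ) < 128)

end Correlation

section Acyclicity

/-- A topological ordering of `G₂ᵏ`. -/
def GV.rank : GV → ℕ
  | .orig n => 3 * n
  | .ga i => 3 * i
  | .mid i _ => 3 * i + 1
  | .gb i => 3 * i + 2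

theorem rank_srcV_le (x : ℕ) : (srcV x).rank ≤ 3 * x + 2 := by
  unfold srcV
  split_ifs <;> simp [GV.rank]

theorem rank_tgtV (y : ℕ) : (tgtV y).rank = 3 * y := by
  unfold tgtV
  split_ifs <;> rfl

theorem lt_of_mem_E1 {e : ℕ × ℕ} (he : e ∈ E1) : e.1 < e.2 := by
  revert e
  decide

theorem rank_lt_rank_of_mem_E2 {k : ℕ} {a b : GV} (h : (a, b) ∈ E2 k) : a.rank < b.rank := by
  simp only [E2, mem_union, mem_image, Prod.mk.injEq] at h
  obtain (⟨⟨x, y⟩, hxy, rfl, rfl⟩ | ⟨p, -, rfl, rfl⟩) | ⟨p, -, rfl, rfl⟩ := h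
  · have hlt : x < y := lt_of_mem_E1 hxy
    calc
      (srcV x).rank ≤ 3 * x + 2 := rank_srcV_le x
      _ < 3 * y := by omega
      _ = (tgtV y).rank := (rank_tgtV y).symm
  · simp [GV.rank]
  · simp [GV.rank]

theorem E2_acyclic (k : ℕ) (x : GV) :
    ¬ Relation.TransGen (fun a b => (a, b) ∈ E2 k) x x := fun h => by
  have hlt := h.lift (p := (· < ·)) GV.rank fun _ _ => rank_lt_rank_of_mem_E2
  rw [Relation.transGen_eq_self] at hlt
  exact lt_irrefl _ hlt

end Acyclicity

theorem acyclic_directed_bunkbed_false_general :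
    ∀ᶠ k in atTop,
      (∀ x : GV, (x, x) ∉ E2 k) ∧
      (¬ ∃ x : GV, Relation.TransGen (fun a b => (a, b) ∈ E2 k) x x) ∧
      Pr (bbEdges (Vs2 k) (E2 k))
          (fun H => bbReach H (GV.orig 1, false) (GV.orig 9, false)) <
        Pr (bbEdges (Vs2 k) (E2 k))
          (fun H => bbReach H (GV.orig 1, false) (GV.orig 9, true)) := by
  have h₁ : 1 ∉ gset := by decide
  have h₉ : 9 ∉ gset := by decide
  filter_upwards [(tendsto_Pr_bbReach h₁ h₉ false false).eventually_lt
    (tendsto_Pr_bbReach h₁ h₉ false true) Pr_bbReach_withPosts_lt] with k hk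
  exact ⟨fun x hx => E2_acyclic k x (.single hx), fun ⟨x, hx⟩ => E2_acyclic k x hx, hk⟩

/-- Theorem 1 of the paper: there is a simple acyclic directed graph
`G` with distinguished vertices `u`, `v` such that in `p = 1/2` Bernoulli bond
percolation on its bunkbed graph, `ℙ(u⁻ → v⁻) < ℙ(u⁻ → v⁺)`; it is witnessed by
`G = G₂ᵏ` for sufficiently large `k`, with `u = 1`, `v = 9`. In particular the
directed acyclic Bunkbed Conjecture is false. -/
theorem acyclic_directed_bunkbed_false :
    ∃ k : ℕ,
      (∀ x : GV, (x, x) ∉ E2 k) ∧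
      (¬ ∃ x : GV, Relation.TransGen (fun a b => (a, b) ∈ E2 k) x x) ∧
      Pr (bbEdges (Vs2 k) (E2 k))
          (fun H => bbReach H (GV.orig 1, false) (GV.orig 9, false)) <
        Pr (bbEdges (Vs2 k) (E2 k))
          (fun H => bbReach H (GV.orig 1, false) (GV.orig 9, true)) :=
  acyclic_directed_bunkbed_false_general.exists
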